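/- Let p ∈ I and S' ⊆ J with |S'∖S_p| ≤ u − 1, and suppose the mixing inequality Mix≤(S',p) defines a facet of conv(X^{l,u}). Then: (U1) S_p ⊆ S'; (U2) if p ≥ 2 then |S'∖S_{p−1}| ≥ u; and (U3) |S'| ≥ u + 1. -/

import Mathlib

open Finset

noncomputable section

def Xset (n m l u : ℕ) (S : Fin m → Finset (Fin n)) : Set ((Fin n → ℝ) × (Fin m → ℝ)) :=
  {zd | (∀ j, zd.1 j = 0 ∨ zd.1 j = 1) ∧ (∀ i, zd.2 i = 0 ∨ zd.2 i = 1) ∧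
        (∀ i, zd.2 i = ∏ j ∈ S i, (1 - zd.1 j)) ∧
        (l : ℝ) ≤ ∑ j, zd.1 j ∧ ∑ j, zd.1 j ≤ (u : ℝ)}

def Dset (n m l u : ℕ) (S : Fin m → Finset (Fin n)) : Set (Fin m → ℝ) :=
  Prod.snd '' Xset n m l u S

def Xfiber (n m l u : ℕ) (S : Fin m → Finset (Fin n)) (δ : Fin m → ℝ) :
    Set (Fin n → ℝ) :=
  {z | (z, δ) ∈ Xset n m l u S}

/-- The family is closed under nonempty intersection. -/
def ClosedInter (n m : ℕ) (S : Fin m → Finset (Fin n)) : Prop :=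
  ∀ i j : Fin m, (S i ∩ S j).Nonempty → ∃ k, S i ∩ S j = S k

/-- The family is proper. -/
def ProperFam (n m l u : ℕ) (S : Fin m → Finset (Fin n)) : Prop :=
  ClosedInter n m S ∧
  ∃ D : Finset (Fin m → ℝ), (D : Set (Fin m → ℝ)) = Dset n m l u S ∧ D.card = m + 1 ∧
    AffineIndependent ℝ (Subtype.val : {x : Fin m → ℝ // x ∈ D} → (Fin m → ℝ))

/-- `f x ≤ c` is valid and defines a facet of `conv P`. -/
def IsFacet {E : Type*} [AddCommGroup E] [Module ℝ E] (P : Set E) (f : E → ℝ) (c : ℝ) :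
    Prop :=
  (∀ x ∈ P, f x ≤ c) ∧
  Module.finrank ℝ (affineSpan ℝ {x ∈ convexHull ℝ P | f x = c}).direction + 1 =
    Module.finrank ℝ (affineSpan ℝ P).direction

def SS (n m : ℕ) (S : Fin m → Finset (Fin n)) : ℕ → Finset (Fin n) :=
  fun k => if h : 1 ≤ k ∧ k ≤ m then S ⟨k - 1, by omega⟩ else if k = 0 then ∅ else Finset.univ

def dd (m : ℕ) (δ : Fin m → ℝ) : ℕ → ℝ :=
  fun k => if h : 1 ≤ k ∧ k ≤ m then δ ⟨k - 1, by omega⟩ else if k = 0 then 1 else 0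

def mixLeLHS (n m u : ℕ) (S : Fin m → Finset (Fin n)) (p : ℕ) (S' : Finset (Fin n))
    (zd : (Fin n → ℝ) × (Fin m → ℝ)) : ℝ :=
  ∑ j ∈ S', zd.1 j + ((u : ℝ) - ((S' \ SS n m S p).card : ℝ)) * dd m zd.2 p
    + ∑ i ∈ Finset.Icc (p + 1) m,
        (((S' \ SS n m S (i - 1)).card : ℝ) - ((S' \ SS n m S i).card : ℝ)) * dd m zd.2 i

def MixLe (n m u : ℕ) (S : Fin m → Finset (Fin n)) (p : ℕ) (S' : Finset (Fin n))
    (zd : (Fin n → ℝ) × (Fin m → ℝ)) : Prop :=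
  mixLeLHS n m u S p S' zd ≤ (u : ℝ)

def mixGeLHS (n m l : ℕ) (S : Fin m → Finset (Fin n)) (p : ℕ) (S' : Finset (Fin n))
    (zd : (Fin n → ℝ) × (Fin m → ℝ)) : ℝ :=
  (((S' ∪ SS n m S p).card : ℝ) - (n : ℝ) + (l : ℝ)) * dd m zd.2 p
    + ∑ i ∈ Finset.Icc (p + 1) m,
        (((S' ∪ SS n m S i).card : ℝ) - ((S' ∪ SS n m S (i - 1)).card : ℝ)) * dd m zd.2 i
    - ∑ j ∈ S', zd.1 j

def MixGe (n m l : ℕ) (S : Fin m → Finset (Fin n)) (p : ℕ) (S' : Finset (Fin n))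
    (zd : (Fin n → ℝ) × (Fin m → ℝ)) : Prop :=
  mixGeLHS n m l S p S' zd ≤ 0

def NestedLin (n m l u : ℕ) (S : Fin m → Finset (Fin n))
    (zd : (Fin n → ℝ) × (Fin m → ℝ)) : Prop :=
  ((l : ℝ) ≤ ∑ j, zd.1 j) ∧ (∑ j, zd.1 j ≤ (u : ℝ)) ∧
  (∀ i : Fin m, ∀ j ∈ S i, zd.1 j + zd.2 i ≤ 1) ∧
  (1 ≤ dd m zd.2 1 + ∑ j ∈ SS n m S 1, zd.1 j) ∧
  (0 ≤ dd m zd.2 m) ∧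
  (∀ j, 0 ≤ zd.1 j) ∧
  (∀ j, j ∉ SS n m S m → zd.1 j ≤ 1) ∧
  (∀ i : ℕ, 1 ≤ i → i + 1 ≤ m → dd m zd.2 (i + 1) ≤ dd m zd.2 i) ∧
  (∀ i : ℕ, 1 ≤ i → i + 1 ≤ m →
    dd m zd.2 i - dd m zd.2 (i + 1) ≤ ∑ j ∈ SS n m S (i + 1) \ SS n m S i, zd.1 j)

def FollowsPattern (n : ℕ) (α α' : Fin n → ℝ) : Prop :=
  (∀ j, (0 ≤ α j → 0 ≤ α' j) ∧ (α j ≤ 0 → α' j ≤ 0)) ∧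
  (∀ j₁ j₂ : Fin n, α j₂ ≤ α j₁ → α' j₂ ≤ α' j₁)

def IsFacetSet {E : Type*} [AddCommGroup E] [Module ℝ E] (P : Set E) (F : Set E) : Prop :=
  ∃ (f : E →ₗ[ℝ] ℝ) (c : ℝ), (∀ x ∈ P, f x ≤ c) ∧
    F = {x ∈ convexHull ℝ P | f x = c} ∧
    Module.finrank ℝ (affineSpan ℝ F).direction + 1 =
      Module.finrank ℝ (affineSpan ℝ P).direction

theorem facet_key {E : Type*} [AddCommGroup E] [Module ℝ E] [FiniteDimensional ℝ E]
    (P : Set E) (f g : E →ₗ[ℝ] ℝ) (c k : ℝ) (hf : IsFacet P f c)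
    (hfull : vectorSpan ℝ P = ⊤) (hne : f ≠ 0)
    (hg : ∀ x ∈ P, f x = c → g x = k) (v : E) (hv : f v = 0) : g v = 0 := by
  obtain ⟨hval, hdim⟩ := hf
  have hconv : convexHull ℝ P ⊆ {x | f x ≤ c ∧ (f x = c → g x = k)} := by
    apply convexHull_min
    · intro x hx
      exact ⟨hval x hx, hg x hx⟩
    · rintro x ⟨hx1, hx2⟩ y ⟨hy1, hy2⟩ a b ha hb hab
      have k1 := mul_le_mul_of_nonneg_left hx1 ha
      have k2 := mul_le_mul_of_nonneg_left hy1 hb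
      have k3 : a * c + b * c = c := by rw [← add_mul, hab, one_mul]
      simp only [Set.mem_ofPred_eq, map_add, map_smul, smul_eq_mul]
      refine ⟨by linarith, fun h => ?_⟩
      rcases ha.eq_or_lt with rfl | ha'
      · have : b = 1 := by linarith
        subst this
        rw [hy2 (by linarith)]; ring
      rcases hb.eq_or_lt with rfl | hb'
      · have : a = 1 := by linarith
        subst this
        rw [hx2 (by linarith)]; ring
      have e1 : f x = c := by
        apply le_antisymm hx1
        by_contra hlt
        push Not at hlt
        have := mul_lt_mul_of_pos_left hlt ha'
        linarith
      have e2 : f y = c := by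
        apply le_antisymm hy1
        by_contra hlt
        push Not at hlt
        have := mul_lt_mul_of_pos_left hlt hb'
        linarith
      rw [hx2 e1, hy2 e2, ← add_mul, hab, one_mul]
  rw [direction_affineSpan, direction_affineSpan, hfull, finrank_top] at hdim
  set D := vectorSpan ℝ {x ∈ convexHull ℝ P | f x = c} with hD
  have h1 : D ≤ LinearMap.ker f := by
    rw [hD, vectorSpan_def, Submodule.span_le]
    rintro _ ⟨x, hx, y, hy, rfl⟩
    simp [hx.2, hy.2]
  have h2 : D ≤ LinearMap.ker g := by
    rw [hD, vectorSpan_def, Submodule.span_le]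
    rintro _ ⟨x, hx, y, hy, rfl⟩
    simp [(hconv hx.1).2 hx.2, (hconv hy.1).2 hy.2]
  have h3 : Module.finrank ℝ (LinearMap.ker f) < Module.finrank ℝ E := by
    apply Submodule.finrank_lt
    rwa [Ne, LinearMap.ker_eq_top]
  have h4 : D = LinearMap.ker f :=
    Submodule.eq_of_le_of_finrank_le h1 (by omega)
  have : v ∈ D := by rw [h4]; simpa using hv
  simpa using h2 this

def ptA (n m : ℕ) (S : Fin m → Finset (Fin n)) (A : Finset (Fin n)) :
    (Fin n → ℝ) × (Fin m → ℝ) :=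
  (fun j => if j ∈ A then 1 else 0, fun i => if Disjoint (S i) A then 1 else 0)

theorem prod_ind {n : ℕ} (T A : Finset (Fin n)) :
    ∏ j ∈ T, (1 - (if j ∈ A then (1:ℝ) else 0)) = if Disjoint T A then 1 else 0 := by
  split_ifs with h
  · apply Finset.prod_eq_one
    intro j hj
    simp [Finset.disjoint_left.mp h hj]
  · rw [Finset.not_disjoint_iff] at h
    obtain ⟨j, hj, hA⟩ := h
    exact Finset.prod_eq_zero hj (by simp [hA])

theorem ptA_mem (n m l u : ℕ) (S : Fin m → Finset (Fin n)) (A : Finset (Fin n))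
    (h1 : l ≤ A.card) (h2 : A.card ≤ u) : ptA n m S A ∈ Xset n m l u S := by
  refine ⟨?_, ?_, ?_, ?_, ?_⟩
  · intro j; by_cases h : j ∈ A <;> simp [ptA, h]
  · intro j; by_cases h : Disjoint (S j) A <;> simp [ptA, h]
  · intro i; simp only [ptA]; rw [prod_ind]
  · simp only [ptA]; simp; exact_mod_cast h1
  · simp only [ptA]; simp; exact_mod_cast h2

theorem mem_ptA (n m l u : ℕ) (S : Fin m → Finset (Fin n)) (x) (hx : x ∈ Xset n m l u S) :
    ∃ A : Finset (Fin n), A.card ≤ u ∧ x = ptA n m S A := by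
  obtain ⟨h1, h2, h3, h4, h5⟩ := hx
  classical
  have hz : x.1 = fun j => if j ∈ Finset.univ.filter (fun j => x.1 j = 1) then (1:ℝ) else 0 := by
    funext j
    rcases h1 j with h | h <;> simp [h]
  refine ⟨Finset.univ.filter (fun j => x.1 j = 1), ?_, ?_⟩
  · rw [hz] at h5
    simp only [Finset.sum_ite_mem, Finset.univ_inter, Finset.sum_const, nsmul_eq_mul, mul_one] at h5
    exact_mod_cast h5
  · refine Prod.ext hz ?_
    funext i
    rw [h3 i]
    simp only [ptA]
    rw [← prod_ind]
    apply Finset.prod_congr rfl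
    intro j _
    rw [← congrFun hz j]

theorem full_dim (n m l u : ℕ) (S : Fin m → Finset (Fin n))
    (hm : 0 < m) (hu : 2 ≤ u) (hlu : l < u)
    (hnested : ∀ i j : Fin m, i < j → S i ⊂ S j)
    (hS1 : 2 ≤ (S ⟨0, hm⟩).card)
    (hSm : l + (S ⟨m - 1, by omega⟩).card ≤ n) :
    vectorSpan ℝ (Xset n m l u S) = ⊤ := by
  have hmono : ∀ i j : Fin m, i ≤ j → S i ⊆ S j := by
    intro i j hij
    rcases hij.eq_or_lt with rfl | h
    · exact subset_rfl
    · exact (hnested i j h).subset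
  set W := vectorSpan ℝ (Xset n m l u S) with hW
  have hdiff : ∀ A B : Finset (Fin n), l ≤ A.card → A.card ≤ u → l ≤ B.card → B.card ≤ u →
      ptA n m S A - ptA n m S B ∈ W := fun A B a1 a2 b1 b2 =>
    vsub_mem_vectorSpan ℝ (ptA_mem n m l u S A a1 a2) (ptA_mem n m l u S B b1 b2)
  have hS1m := Finset.card_le_card (hmono ⟨0, hm⟩ ⟨m - 1, by omega⟩ (by simp [Fin.le_def]))
  have hz : ∀ j : Fin n, ((Pi.single j 1 : Fin n → ℝ), (0 : Fin m → ℝ)) ∈ W := by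
    intro j
    obtain ⟨s, hs, hsj⟩ := Finset.exists_mem_ne (by omega : 1 < (S ⟨0, hm⟩).card) j
    obtain ⟨A, hA1, hA2, hA3⟩ := Finset.exists_subsuperset_card_eq
      (s := {s}) (t := Finset.univ.erase j) (n := max l 1)
      (by simpa using hsj) (by simp) (by simp [Finset.card_erase_of_mem]; omega)
    have hjA : j ∉ A := fun h => by simpa using hA2 h
    have hsA : s ∈ A := by simpa using hA1
    have hc : (insert j A).card = max l 1 + 1 := by rw [Finset.card_insert_of_notMem hjA, hA3]
    have := hdiff (insert j A) A (by omega) (by omega) (by omega) (by omega)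
    convert this using 1
    refine Prod.ext ?_ ?_
    · funext t
      by_cases htj : t = j
      · subst htj; simp [ptA, hjA]
      · simp [ptA, htj]
    · funext i
      have hsi : s ∈ S i := hmono ⟨0, hm⟩ i (by simp [Fin.le_def]) hs
      have n1 : ¬ Disjoint (S i) A := Finset.not_disjoint_iff.mpr ⟨s, hsi, hsA⟩
      have n2 : ¬ Disjoint (S i) (insert j A) :=
        Finset.not_disjoint_iff.mpr ⟨s, hsi, by simp [hsA]⟩
      simp [ptA, n1, n2]
  have hzall : ∀ a : Fin n → ℝ, (a, (0 : Fin m → ℝ)) ∈ W := by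
    intro a
    have : (a, (0 : Fin m → ℝ)) = ∑ j, a j • ((Pi.single j 1 : Fin n → ℝ), (0 : Fin m → ℝ)) := by
      refine Prod.ext ?_ ?_
      · funext t; simp [Prod.fst_sum, Finset.sum_apply, Pi.single_apply]
      · simp [Prod.snd_sum]
    rw [this]
    exact Submodule.sum_mem _ fun j _ => Submodule.smul_mem _ _ (hz j)
  have hV : ∀ k : ℕ, k ≤ m →
      ((0 : Fin n → ℝ), (fun t : Fin m => if k ≤ t.val then (1:ℝ) else 0)) ∈ W := by
    intro k hk
    rcases hk.eq_or_lt with rfl | hk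
    · convert W.zero_mem using 1
      refine Prod.ext rfl ?_
      funext t
      have := t.2
      simp
    · obtain ⟨b, hb, hb'⟩ : ∃ b ∈ S ⟨k, hk⟩, ∀ t : Fin m, t.val < k → b ∉ S t := by
        rcases Nat.eq_zero_or_pos k with rfl | hk0
        · obtain ⟨b, hb⟩ := Finset.card_pos.mp (by omega : 0 < (S ⟨0, hm⟩).card)
          exact ⟨b, hb, fun t ht => by omega⟩
        · obtain ⟨b, hb, hb2⟩ := Finset.exists_of_ssubset
            (hnested ⟨k - 1, by omega⟩ ⟨k, hk⟩ (by simp [Fin.lt_def]; omega))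
          exact ⟨b, hb, fun t ht h => hb2 (hmono t ⟨k - 1, by omega⟩
            (by simp only [Fin.le_def]; omega) h)⟩
      have hlc : l ≤ ((S ⟨m - 1, by omega⟩)ᶜ).card := by
        rw [Finset.card_compl, Fintype.card_fin]; omega
      obtain ⟨C0, hC0, hC0c⟩ := Finset.exists_subset_card_eq hlc
      obtain ⟨C, hC, hCc⟩ := Finset.exists_subset_card_eq (le_trans (Nat.sub_le l 1) hlc)
      have hdis : ∀ (D : Finset (Fin n)), D ⊆ (S ⟨m - 1, by omega⟩)ᶜ → ∀ t, Disjoint (S t) D := by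
        intro D hD t
        rw [Finset.disjoint_left]
        intro a ha haD
        have := hD haD
        rw [Finset.mem_compl] at this
        exact this (hmono t ⟨m - 1, by omega⟩ (by simp only [Fin.le_def]; have := t.2; omega) ha)
      have hbC : b ∉ C := fun h => Finset.disjoint_left.mp (hdis C hC ⟨k, hk⟩) hb h
      have hcard : (insert b C).card = l - 1 + 1 := by
        rw [Finset.card_insert_of_notMem hbC, hCc]
      have h1 := hdiff C0 (insert b C) (by omega) (by omega) (by omega) (by omega)
      have h2 := W.sub_mem h1 (hzall ((ptA n m S C0).1 - (ptA n m S (insert b C)).1))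
      convert h2 using 1
      refine Prod.ext ?_ ?_
      · simp
      · funext t
        have d0 := hdis C0 hC0 t
        have d1 := hdis C hC t
        by_cases hkt : k ≤ t.val
        · have hbt : b ∈ S t := hmono ⟨k, hk⟩ t (by simpa [Fin.le_def] using hkt) hb
          simp [ptA, d0, hkt, hbt]
        · have hbt := hb' t (by omega)
          simp [ptA, d0, d1, hkt, hbt]
  have he : ∀ i : Fin m, ((0 : Fin n → ℝ), (Pi.single i 1 : Fin m → ℝ)) ∈ W := by
    intro i
    have := W.sub_mem (hV i.val i.2.le) (hV (i.val + 1) i.2)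
    convert this using 1
    refine Prod.ext (by simp) ?_
    funext t
    simp only [Prod.snd_sub, Pi.sub_apply, Pi.single_apply, Fin.ext_iff]
    split_ifs <;> first | omega | simp
  rw [eq_top_iff]
  rintro ⟨a, d⟩ -
  have : (a, d) = (a, (0 : Fin m → ℝ)) +
      ∑ i, d i • ((0 : Fin n → ℝ), (Pi.single i 1 : Fin m → ℝ)) := by
    refine Prod.ext ?_ ?_
    · simp [Prod.fst_sum]
    · funext t; simp [Prod.snd_sum, Finset.sum_apply, Pi.single_apply]
  rw [this]
  exact W.add_mem (hzall a) (Submodule.sum_mem _ fun i _ => Submodule.smul_mem _ _ (he i))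

theorem dd_eq {m k : ℕ} (δ : Fin m → ℝ) (h : 1 ≤ k ∧ k ≤ m) :
    dd m δ k = δ ⟨k - 1, by omega⟩ := by simp [dd, h]

theorem SS_eq {n m k : ℕ} (S : Fin m → Finset (Fin n)) (h : 1 ≤ k ∧ k ≤ m) :
    SS n m S k = S ⟨k - 1, by omega⟩ := by simp [SS, h]

theorem dd_add {m k : ℕ} (a b : Fin m → ℝ) (h : 1 ≤ k) :
    dd m (a + b) k = dd m a k + dd m b k := by
  unfold dd; split_ifs <;> first | omega | simp

theorem dd_smul {m k : ℕ} (c : ℝ) (b : Fin m → ℝ) (h : 1 ≤ k) :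
    dd m (c • b) k = c * dd m b k := by
  unfold dd; split_ifs <;> first | omega | simp

def mixL (n m u : ℕ) (S : Fin m → Finset (Fin n)) (p : ℕ) (hp : 1 ≤ p) (S' : Finset (Fin n)) :
    ((Fin n → ℝ) × (Fin m → ℝ)) →ₗ[ℝ] ℝ where
  toFun := mixLeLHS n m u S p S'
  map_add' x y := by
    simp only [mixLeLHS, Prod.fst_add, Prod.snd_add, Pi.add_apply, Finset.sum_add_distrib,
      dd_add _ _ hp]
    rw [Finset.sum_congr (s₁ := Finset.Icc (p + 1) m) rfl (fun i hi => by
      rw [dd_add _ _ (by have := (Finset.mem_Icc.mp hi).1; omega), mul_add]),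
      Finset.sum_add_distrib]
    ring
  map_smul' c x := by
    simp only [mixLeLHS, Prod.smul_fst, Prod.smul_snd, Pi.smul_apply, dd_smul _ _ hp,
      smul_eq_mul, RingHom.id_apply]
    rw [Finset.sum_congr (s₁ := Finset.Icc (p + 1) m) rfl (fun i hi => by
      rw [dd_smul _ _ (by have := (Finset.mem_Icc.mp hi).1; omega), mul_left_comm]),
      ← Finset.mul_sum, ← Finset.mul_sum]
    ring

theorem stmt14 (n m l u : ℕ) (S : Fin m → Finset (Fin n))
    (hn : 0 < n) (hm : 0 < m) (hu : 2 ≤ u) (hlu : l < u)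
    (hnested : ∀ i j : Fin m, i < j → S i ⊂ S j)
    (hS1 : 2 ≤ (SS n m S 1).card)
    (hSm : l ≤ n - (SS n m S m).card)
    (p : ℕ) (hp1 : 1 ≤ p) (hpm : p ≤ m)
    (S' : Finset (Fin n)) (hS' : (S' \ SS n m S p).card ≤ u - 1)
    (hfacet : IsFacet (Xset n m l u S) (mixLeLHS n m u S p S') (u : ℝ)) :
    SS n m S p ⊆ S' ∧
    (2 ≤ p → u ≤ (S' \ SS n m S (p - 1)).card) ∧
    u + 1 ≤ S'.card := by
  classical
  have hmono : ∀ i j : Fin m, i ≤ j → S i ⊆ S j := by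
    intro i j hij
    rcases hij.eq_or_lt with rfl | h
    · exact subset_rfl
    · exact (hnested i j h).subset
  have hSSmono : ∀ i j : ℕ, 1 ≤ i → i ≤ j → j ≤ m → SS n m S i ⊆ SS n m S j := by
    intro i j h1 h2 h3
    rw [SS_eq S ⟨h1, by omega⟩, SS_eq S ⟨by omega, h3⟩]
    exact hmono _ _ (by simp only [Fin.le_def]; omega)
  have hfull : vectorSpan ℝ (Xset n m l u S) = ⊤ := by
    have hc : (SS n m S m).card ≤ n := by simpa using Finset.card_le_univ (SS n m S m)
    apply full_dim n m l u S hm hu hlu hnested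
    · rw [SS_eq S ⟨le_rfl, hm⟩] at hS1
      exact hS1
    · rw [SS_eq S ⟨hm, le_rfl⟩] at hSm hc
      omega
  have hc0 : ((S' \ SS n m S p).card : ℝ) < u := by
    have : (S' \ SS n m S p).card < u := by omega
    exact_mod_cast this
  have hne : mixL n m u S p hp1 S' ≠ 0 := by
    intro h
    have h2 := LinearMap.congr_fun h
      ((0 : Fin n → ℝ), (Pi.single ⟨p - 1, by omega⟩ 1 : Fin m → ℝ))
    have h3 : mixLeLHS n m u S p S'
      ((0 : Fin n → ℝ), (Pi.single ⟨p - 1, by omega⟩ 1 : Fin m → ℝ)) = 0 := h2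
    unfold mixLeLHS at h3
    rw [dd_eq _ ⟨hp1, hpm⟩, Finset.sum_eq_zero (s := Finset.Icc (p + 1) m)] at h3
    · simp at h3
      linarith
    · intro i hi
      rw [Finset.mem_Icc] at hi
      rw [dd_eq _ ⟨by omega, hi.2⟩]
      dsimp only
      rw [Pi.single_apply, if_neg (by simp [Fin.ext_iff]; omega),
        mul_zero]
  have hdd : ∀ (A : Finset (Fin n)) (k : ℕ), 1 ≤ k → k ≤ m →
      dd m (ptA n m S A).2 k = if Disjoint (SS n m S k) A then 1 else 0 := by
    intro A k h1 h2
    rw [dd_eq _ ⟨h1, h2⟩, SS_eq S ⟨h1, h2⟩]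
    rfl
  have htight : ∀ A : Finset (Fin n), mixLeLHS n m u S p S' (ptA n m S A) = u →
      ¬ Disjoint (SS n m S p) A → (S' ∩ A).card = u := by
    intro A hA hd
    unfold mixLeLHS at hA
    rw [hdd A p hp1 hpm, if_neg hd, Finset.sum_eq_zero (s := Finset.Icc (p + 1) m)] at hA
    · simp [ptA] at hA
      exact_mod_cast hA
    · intro i hi
      rw [Finset.mem_Icc] at hi
      rw [hdd A i (by omega) hi.2, if_neg, mul_zero]
      exact fun h => hd (Finset.disjoint_of_subset_left (hSSmono p i hp1 (by omega) hi.2) h)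
  have key : ∀ g : ((Fin n → ℝ) × (Fin m → ℝ)) →ₗ[ℝ] ℝ, ∀ k : ℝ,
      (∀ A : Finset (Fin n), A.card ≤ u → Disjoint (SS n m S p) A → g (ptA n m S A) = k) →
      (∀ A : Finset (Fin n), A.card ≤ u → ¬ Disjoint (SS n m S p) A → (S' ∩ A).card = u →
        g (ptA n m S A) = k) →
      ∀ v, mixLeLHS n m u S p S' v = 0 → g v = 0 := by
    intro g k h1 h2 v hv
    refine facet_key (Xset n m l u S) (mixL n m u S p hp1 S') g u k hfacet hfull hne ?_ v hv
    intro x hx hfx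
    obtain ⟨A, hA, rfl⟩ := mem_ptA n m l u S x hx
    by_cases hd : Disjoint (SS n m S p) A
    · exact h1 A hA hd
    · exact h2 A hA hd (htight A hfx hd)
  have dd0 : ∀ k : ℕ, 1 ≤ k → dd m 0 k = 0 := by
    intro k hk
    unfold dd; split_ifs <;> first | omega | simp
  have fz : ∀ a : Fin n → ℝ, mixLeLHS n m u S p S' (a, 0) = ∑ j ∈ S', a j := by
    intro a
    unfold mixLeLHS
    rw [dd0 p hp1, Finset.sum_eq_zero (s := Finset.Icc (p + 1) m)]
    · simp
    · intro i hi
      rw [Finset.mem_Icc] at hi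
      rw [dd0 i (by omega), mul_zero]
  have U1 : SS n m S p ⊆ S' := by
    intro j hj
    by_contra hjS
    have := key (LinearMap.proj j ∘ₗ LinearMap.fst ℝ _ _) 0 ?_ ?_
      ((Pi.single j 1 : Fin n → ℝ), 0) ?_
    · simp at this
    · intro A _ hd
      simp [ptA, Finset.disjoint_left.mp hd hj]
    · intro A hA _ hc
      have : S' ∩ A = A := Finset.eq_of_subset_of_card_le Finset.inter_subset_right (by omega)
      have hjA : j ∉ A := fun h => hjS (Finset.inter_eq_right.mp this h)
      simp [ptA, hjA]
    · rw [fz]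
      simp [Pi.single_apply, hjS]
  refine ⟨U1, ?_, ?_⟩
  · intro hp2
    by_contra hlt
    push Not at hlt
    have := key ((LinearMap.proj ⟨p - 1 - 1, by omega⟩ - LinearMap.proj ⟨p - 1, by omega⟩) ∘ₗ
      LinearMap.snd ℝ _ _) 0 ?_ ?_
      ((0 : Fin n → ℝ), (Pi.single ⟨p - 1 - 1, by omega⟩ 1 : Fin m → ℝ)) ?_
    · simp [Pi.single_apply, Fin.ext_iff, show ¬ (p - 1 = p - 1 - 1) by omega] at this
    · intro A _ hd
      have hd' := Finset.disjoint_of_subset_left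
        (hSSmono (p - 1) p (by omega) (by omega) hpm) hd
      rw [SS_eq S ⟨hp1, hpm⟩] at hd
      rw [SS_eq S ⟨by omega, by omega⟩] at hd'
      simp [ptA, hd, hd']
    · intro A hA hd hc
      have hd' : ¬ Disjoint (SS n m S (p - 1)) A := by
        intro h
        have : S' ∩ A ⊆ S' \ SS n m S (p - 1) := by
          intro a ha
          rw [Finset.mem_inter] at ha
          rw [Finset.mem_sdiff]
          exact ⟨ha.1, fun h' => Finset.disjoint_left.mp h h' ha.2⟩
        have := Finset.card_le_card this
        omega
      rw [SS_eq S ⟨hp1, hpm⟩] at hd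
      rw [SS_eq S ⟨by omega, by omega⟩] at hd'
      simp [ptA, hd, hd']
    · unfold mixLeLHS
      rw [dd_eq _ ⟨hp1, hpm⟩, Finset.sum_eq_zero (s := Finset.Icc (p + 1) m)]
      · simp [Pi.single_apply, Fin.ext_iff]
        intro h; omega
      · intro i hi
        rw [Finset.mem_Icc] at hi
        rw [dd_eq _ ⟨by omega, hi.2⟩]
        dsimp only
        rw [Pi.single_apply, if_neg (by simp [Fin.ext_iff]; omega),
          mul_zero]
  · by_contra hlt
    push Not at hlt
    have h2 : 1 < (SS n m S p).card := by
      have := Finset.card_le_card (hSSmono 1 p le_rfl hp1 hpm)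
      omega
    obtain ⟨j, hj, j', hj', hjj⟩ := Finset.one_lt_card.mp h2
    have := key ((LinearMap.proj j : (Fin n → ℝ) →ₗ[ℝ] ℝ) ∘ₗ LinearMap.fst ℝ _ _ +
      (LinearMap.proj (⟨p - 1, by omega⟩ : Fin m) : (Fin m → ℝ) →ₗ[ℝ] ℝ) ∘ₗ
        LinearMap.snd ℝ _ _) 1 ?_ ?_
      ((Pi.single j 1 - Pi.single j' 1 : Fin n → ℝ), 0) ?_
    · simp [Pi.single_apply, hjj] at this
    · intro A _ hd
      have hjA := Finset.disjoint_left.mp hd hj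
      rw [SS_eq S ⟨hp1, hpm⟩] at hd
      simp [ptA, hjA, hd]
    · intro A hA hd hc
      have : S' ∩ A = S' := Finset.eq_of_subset_of_card_le Finset.inter_subset_left (by omega)
      have hjA : j ∈ A := Finset.inter_eq_left.mp this (U1 hj)
      rw [SS_eq S ⟨hp1, hpm⟩] at hd
      simp [ptA, hjA, hd]
    · rw [fz]
      simp [Pi.single_apply, U1 hj, U1 hj']
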